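/- Let n ≥ 1 and let (B_m(t))_{m ≥ 0} be the family of polynomials in ℚ[t] determined by the formal power series identities B_m(t) = (1−t)^{m+1} · Σ_{k ≥ 0} (2k+1)^m t^k for every m ≥ 0. Then the following identity of polynomials in ℚ[t] holds: n! (1+t)² · Σ_{π ∈ 𝔦_n} 2^{udr(π)} t^{udr(π)} (1+t²)^{n−udr(π)} = 2 Σ_{k=1}^{n} c_{n,k} 2^k A_k(t²) (1−t²)^{n−k} + 2t Σ_{k=0}^{n} d_{n,k} B_k(t²) (1−t²)^{n−k}, where c_{n,k} is the number of permutations π of [n] such that no cycle of π has length divisible by 4 and π² has exactly k cycles (counting fixed points), and d_{n,k} is the number of permutations π of [n] such that π² has exactly k odd cycles (cycles of odd length, counting fixed points). (This is the stated formula for I_n^{udr}(2t/(1+t²)), where I_n^{udr}(t) = Σ_{π ∈ 𝔦_n} t^{udr(π)}, with denominators cleared; note udr(π) ≤ n for every π ∈ S_n.) -/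

import Mathlib

open scoped Classical

noncomputable section

def oneLine (n : ℕ) (π : Equiv.Perm (Fin n)) (i : ℕ) : ℕ :=
  if h : 1 ≤ i ∧ i ≤ n then (π ⟨i - 1, by omega⟩).val + 1 else 0

def des (n : ℕ) (π : Equiv.Perm (Fin n)) : ℕ :=
  ((Finset.Icc 1 (n - 1)).filter fun i => oneLine n π (i + 1) < oneLine n π i).card

def pk (n : ℕ) (π : Equiv.Perm (Fin n)) : ℕ :=
  ((Finset.Icc 2 (n - 1)).filter fun i =>
    oneLine n π (i - 1) < oneLine n π i ∧ oneLine n π (i + 1) < oneLine n π i).card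

def lpk (n : ℕ) (π : Equiv.Perm (Fin n)) : ℕ :=
  ((Finset.Icc 1 (n - 1)).filter fun i =>
    oneLine n π (i - 1) < oneLine n π i ∧ oneLine n π (i + 1) < oneLine n π i).card

def pval (n : ℕ) (π : Equiv.Perm (Fin n)) : ℕ :=
  ((Finset.Icc 2 (n - 1)).filter fun i =>
    oneLine n π i < oneLine n π (i - 1) ∧ oneLine n π i < oneLine n π (i + 1)).card

def udr (n : ℕ) (π : Equiv.Perm (Fin n)) : ℕ := lpk n π + pval n π + 1

def fullCycleType (n : ℕ) (π : Equiv.Perm (Fin n)) : Multiset ℕ :=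
  π.cycleType + Multiset.replicate (n - π.support.card) 1

def numCycles (n : ℕ) (π : Equiv.Perm (Fin n)) : ℕ := Multiset.card (fullCycleType n π)

def numOddCycles (n : ℕ) (π : Equiv.Perm (Fin n)) : ℕ :=
  Multiset.card ((fullCycleType n π).filter fun p => p % 2 = 1)

def IsCyclicPerm (n : ℕ) (π : Equiv.Perm (Fin n)) : Prop :=
  fullCycleType n π = {n}

def cyclicSet (n : ℕ) : Finset (Equiv.Perm (Fin n)) :=
  Finset.univ.filter fun π => IsCyclicPerm n π

def invSet (n : ℕ) : Finset (Equiv.Perm (Fin n)) :=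
  Finset.univ.filter fun π => π ^ 2 = 1

def eulerianA (m : ℕ) : Polynomial ℚ :=
  ∑ π : Equiv.Perm (Fin m), Polynomial.X ^ (des m π + 1)

def peakP (m : ℕ) : Polynomial ℚ :=
  ∑ π : Equiv.Perm (Fin m), Polynomial.X ^ (pk m π + 1)

def leftPeakP (m : ℕ) : Polynomial ℚ :=
  ∑ π : Equiv.Perm (Fin m), Polynomial.X ^ (lpk m π)

def cnk (n k : ℕ) : ℕ :=
  (Finset.univ.filter fun π : Equiv.Perm (Fin n) =>
    (∀ p ∈ fullCycleType n π, ¬ (4 ∣ p)) ∧ numCycles n (π ^ 2) = k).card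

def bnk (n k : ℕ) : ℕ :=
  (Finset.univ.filter fun π : Equiv.Perm (Fin n) => numCycles n (π ^ 2) = k).card

def dnk (n k : ℕ) : ℕ :=
  (Finset.univ.filter fun π : Equiv.Perm (Fin n) => numOddCycles n (π ^ 2) = k).card

/-!
Give the boxes `a < m` the alternating signs `(-1) ^ a`, and count in two ways the pairs of an
involution `π` and boxes `f : Fin n → Fin m` that form a signed `P`-partition: `f` is weakly
increasing, and `π` is increasing on the boxes of sign `1` and decreasing on those of sign `-1`.

For a fixed `π`, a tie `f i = f (i + 1)` is allowed only for values whose parity is that of the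
number of direction changes of `π` up to there. Adding the letters one at a time, the generating
function in `m` is `(1 + X) ^ 2 (2X) ^ u (1 + X ^ 2) ^ (n - u) / (2 (1 - X ^ 2) ^ (n + 1))` with
`u = udr π`.

For a fixed `m`, the numbers of positions `i` in a given box with `π i` in a given box form a
symmetric matrix, with entries at most `1` where the signs of the two boxes differ, and sorting
recovers the pair from it. So the pairs are families of multiplicities on the edges and loops of a
complete graph. Their generating function is a product over the edges, and its logarithmic
derivative identifies it with the exponential generating function of all permutations, where a
`p`-cycle weighs `m ^ gcd(p, 2)` if `4 ∤ p` and the squared sum of the signs, `0` for even `m` and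
`1` for odd `m`, if `4 ∣ p`. Hence the count times `n!` is `∑ k, c_{n,k} m ^ k` for even `m` and
`∑ k, d_{n,k} m ^ k` for odd `m`. The even part of `∑ m, m ^ k X ^ m` gives `A_k`, by the count
over all permutations with all signs `1`, and the odd part gives `B_k`.
-/

open Finset

section Sorting

variable {α β : Type*} [LinearOrder β] {n : ℕ}

theorem exists_monotone_comp_card_fiber_eq [Fintype α] (key : α → β) (M : α → ℕ)
    (hM : ∑ a, M a = n) :
    ∃ h : Fin n → α, Monotone (key ∘ h) ∧ ∀ a, #{i | h i = a} = M a := by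
  let e : Fin n ≃ Σ a, Fin (M a) := (Fintype.equivFinOfCardEq (by simp [hM])).symm
  let u : Fin n → α := fun i => (e i).1
  refine ⟨u ∘ Tuple.sort (key ∘ u), Tuple.monotone_sort (key ∘ u), fun a => ?_⟩
  calc #{i | (u ∘ Tuple.sort (key ∘ u)) i = a}
      = Fintype.card {x : Σ a, Fin (M a) // x.1 = a} := by
        rw [← Fintype.card_subtype]
        exact Fintype.card_congr (((Tuple.sort (key ∘ u)).trans e).subtypeEquiv fun _ => Iff.rfl)
    _ = M a := by rw [Fintype.card_congr (Equiv.sigmaSubtype a), Fintype.card_fin]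

theorem eq_of_monotone_comp_of_card_fiber_eq {key : α → β} (hkey : key.Injective)
    {h h' : Fin n → α} (hh : Monotone (key ∘ h)) (hh' : Monotone (key ∘ h'))
    (hcard : ∀ a, #{i | h i = a} = #{i | h' i = a}) : h = h' := by
  have e (a : α) : {i // h i = a} ≃ {i // h' i = a} :=
    Fintype.equivOfCardEq (by simpa only [Fintype.card_subtype] using hcard a)
  have hσ : h' ∘ Equiv.ofFiberEquiv e = h := funext (Equiv.ofFiberEquiv_map e)
  have hsort : (key ∘ h') ∘ Equiv.ofFiberEquiv e = (key ∘ h') ∘ Equiv.refl _ :=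
    Tuple.unique_monotone (by rwa [Function.comp_assoc, hσ]) hh'
  rw [Function.comp_assoc, hσ] at hsort
  exact hkey.comp_left hsort

theorem existsUnique_perm_strictMono_comp {k : Fin n → β} (hk : k.Injective) :
    ∃! σ : Equiv.Perm (Fin n), StrictMono (k ∘ σ) := by
  refine ⟨Tuple.sort k, (Tuple.monotone_sort k).strictMono_of_injective
    (hk.comp (Tuple.sort k).injective), fun σ hσ => Equiv.ext fun i => hk ?_⟩
  exact congrFun (Tuple.unique_monotone hσ.monotone (Tuple.monotone_sort k)) i

end Sorting

section Compatible

variable {ι : Type*} {s : ι → ℤˣ} {n : ℕ}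

/-- The sort key of a letter `x` lying in the box `a`: boxes are compared first, and the letters
of the box `a` are compared in increasing or decreasing order according to the sign `s a`. -/
def signedKey (s : ι → ℤˣ) (a : ι) (x : ℕ) : ι ×ₗ ℤ := toLex (a, s a * x)

theorem signedKey_inj {a b : ι} {x y : ℕ} :
    signedKey s a x = signedKey s b y ↔ a = b ∧ x = y := by
  simp only [signedKey, EmbeddingLike.apply_eq_iff_eq, Prod.mk.injEq]
  refine and_congr_right ?_
  rintro rfl
  simp

variable [LinearOrder ι]

/-- A signed `P`-partition of the word `π`: reading the letters of `π` from left to right, their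
boxes `f` weakly increase, and the letters inside the box `a` increase if `s a = 1` and decrease
if `s a = -1`. -/
def IsCompatible (s : ι → ℤˣ) (π : Equiv.Perm (Fin n)) (f : Fin n → ι) : Prop :=
  StrictMono fun i => signedKey s (f i) (π i)

theorem signedKey_lt_iff {a b : ι} {x y : ℕ} :
    signedKey s a x < signedKey s b y ↔ a < b ∨ a = b ∧ (s a : ℤ) * x < s b * y :=
  Prod.Lex.toLex_lt_toLex

theorem signedKey_lt_iff_of_one {a : ι} (h : s a = 1) {x y : ℕ} :
    signedKey s a x < signedKey s a y ↔ x < y := by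
  simp [signedKey_lt_iff, h]

theorem signedKey_lt_iff_of_neg_one {a : ι} (h : s a = -1) {x y : ℕ} :
    signedKey s a x < signedKey s a y ↔ y < x := by
  simp [signedKey_lt_iff, h]

theorem existsUnique_isCompatible (s : ι → ℤˣ) (g : Fin n → ι) :
    ∃! σ : Equiv.Perm (Fin n), IsCompatible s σ (g ∘ σ) :=
  existsUnique_perm_strictMono_comp (k := fun x : Fin n => signedKey s (g x) x)
    fun _ _ h => Fin.ext (signedKey_inj.1 h).2

theorem sum_card_isCompatible [Fintype ι] (s : ι → ℤˣ) (n : ℕ) :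
    ∑ σ : Equiv.Perm (Fin n), #{f | IsCompatible s σ f} = Fintype.card ι ^ n := by
  calc ∑ σ : Equiv.Perm (Fin n), #{f | IsCompatible s σ f}
      = ∑ σ : Equiv.Perm (Fin n), #{g : Fin n → ι | IsCompatible s σ (g ∘ σ)} :=
        sum_congr rfl fun σ _ => card_equiv (σ.arrowCongr (Equiv.refl ι)) fun f => by
          simp [Function.comp_assoc, Equiv.arrowCongr]
    _ = ∑ g : Fin n → ι, #{σ | IsCompatible s σ (g ∘ σ)} :=
        sum_card_bipartiteAbove_eq_sum_card_bipartiteBelow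
          fun (σ : Equiv.Perm (Fin n)) (g : Fin n → ι) => IsCompatible s σ (g ∘ σ)
    _ = ∑ _g : Fin n → ι, 1 := sum_congr rfl fun g _ => by
        simpa only [Fintype.card_subtype] using
          Fintype.existsUnique_iff_card_one _ |>.1 (existsUnique_isCompatible s g)
    _ = Fintype.card ι ^ n := by simp

variable {π : Equiv.Perm (Fin n)} {f : Fin n → ι}

theorem IsCompatible.monotone (h : IsCompatible s π f) : Monotone f := fun _ _ hij =>
  Prod.Lex.monotone_fst _ _ (StrictMono.monotone h hij)

theorem IsCompatible.signedKey_lt_signedKey (h : IsCompatible s π f) {i j : Fin n} :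
    signedKey s (f i) (π i) < signedKey s (f j) (π j) ↔ i < j :=
  StrictMono.lt_iff_lt h

theorem IsCompatible.signedKey_lt_signedKey_of_inv (h : IsCompatible s π⁻¹ f) {i j : Fin n} :
    signedKey s (f (π i)) i < signedKey s (f (π j)) j ↔ π i < π j := by
  simpa using h.signedKey_lt_signedKey (i := π i) (j := π j)

end Compatible

section BoxCount

variable {m n : ℕ} {s : Fin m → ℤˣ} {π π' : Equiv.Perm (Fin n)} {f f' g g' : Fin n → Fin m}

/-- The contingency matrix of the boxes `f` of the positions and the boxes `g` of the letters
of `π`: the entry `(a, b)` counts the positions in the box `a` whose letter is in the box `b`. -/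
def boxCount (π : Equiv.Perm (Fin n)) (f g : Fin n → Fin m) (a b : Fin m) : ℕ :=
  #{i | f i = a ∧ g (π i) = b}

theorem boxCount_inv (a b : Fin m) : boxCount π⁻¹ g f a b = boxCount π f g b a :=
  card_equiv π⁻¹ fun x => by simp [and_comm]

theorem boxCount_le_one (hf : IsCompatible s π f) (hg : IsCompatible s π⁻¹ g) {a b : Fin m}
    (hab : s a ≠ s b) : boxCount π f g a b ≤ 1 := by
  refine card_le_one.2 fun i hi j hj => ?_
  simp only [mem_filter, mem_univ, true_and] at hi hj
  have hij := hf.signedKey_lt_signedKey (i := i) (j := j)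
  have hji := hf.signedKey_lt_signedKey (i := j) (j := i)
  have hπij := hg.signedKey_lt_signedKey_of_inv (i := i) (j := j)
  have hπji := hg.signedKey_lt_signedKey_of_inv (i := j) (j := i)
  rw [hi.1, hj.1] at hij hji
  rw [hi.2, hj.2] at hπij hπji
  rcases Int.units_eq_one_or (s a) with ha | ha <;> rcases Int.units_eq_one_or (s b) with hb | hb
  · exact absurd (ha.trans hb.symm) hab
  · rw [signedKey_lt_iff_of_one ha] at hij hji
    rw [signedKey_lt_iff_of_neg_one hb] at hπij hπji
    omega
  · rw [signedKey_lt_iff_of_neg_one ha] at hij hji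
    rw [signedKey_lt_iff_of_one hb] at hπij hπji
    omega
  · exact absurd (ha.trans hb.symm) hab

theorem IsCompatible.monotone_signedKey_comp (hf : IsCompatible s π f) (hg : Monotone g) :
    Monotone fun i => signedKey s (f i) (g (π i)) := by
  intro i j hij
  rcases hij.eq_or_lt with rfl | hij
  · exact le_rfl
  refine Prod.Lex.toLex_le_toLex.2 ?_
  rcases signedKey_lt_iff.1 (hf hij) with hlt | ⟨heq, hlt⟩
  · exact Or.inl hlt
  refine Or.inr ⟨heq, ?_⟩
  dsimp only at heq hlt ⊢
  rw [← heq] at hlt ⊢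
  rcases Int.units_eq_one_or (s (f i)) with h | h <;>
    simp only [h, Units.val_one, Units.val_neg, one_mul, neg_mul, neg_lt_neg_iff, neg_le_neg_iff,
      Nat.cast_lt, Nat.cast_le, Fin.val_fin_lt, Fin.val_fin_le] at hlt ⊢ <;>
    exact hg hlt.le

theorem eq_of_boxCount_eq (hf : IsCompatible s π f) (hg : IsCompatible s π⁻¹ g)
    (hf' : IsCompatible s π' f') (hg' : IsCompatible s π'⁻¹ g')
    (h : boxCount π f g = boxCount π' f' g') : π = π' ∧ f = f' ∧ g = g' := by
  have hkey : (fun p : Fin m × Fin m => signedKey s p.1 p.2).Injective := fun p q hpq =>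
    Prod.ext (signedKey_inj.1 hpq).1 (Fin.ext (signedKey_inj.1 hpq).2)
  have hpair : (fun i => (f i, g (π i))) = fun i => (f' i, g' (π' i)) :=
    eq_of_monotone_comp_of_card_fiber_eq hkey (hf.monotone_signedKey_comp hg.monotone)
      (hf'.monotone_signedKey_comp hg'.monotone) fun p => by
        simpa only [boxCount, Prod.ext_iff] using congrFun (congrFun h p.1) p.2
  have hff : f = f' := funext fun i => congrArg Prod.fst (congrFun hpair i)
  have hgg : g ∘ π = g' ∘ π' := funext fun i => congrArg Prod.snd (congrFun hpair i)
  have hinv : π⁻¹ = π'⁻¹ := (existsUnique_isCompatible s (g ∘ π)).unique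
    (by simpa [Function.comp_assoc] using hg)
    (by simpa [hgg, Function.comp_assoc] using hg')
  obtain rfl : π = π' := inv_injective hinv
  exact ⟨rfl, hff, π.surjective.injective_comp_right hgg⟩

theorem isCompatible_of_monotone_signedKey
    (hcount : ∀ a b, s a ≠ s b → boxCount π f g a b ≤ 1)
    (hfg : Monotone fun i => signedKey s (f i) (g (π i))) (hg : IsCompatible s π⁻¹ g) :
    IsCompatible s π f := by
  intro i j hij
  rcases Prod.Lex.toLex_le_toLex.1 (hfg hij.le) with hlt | ⟨heq, hle⟩
  · exact signedKey_lt_iff.2 (Or.inl hlt)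
  dsimp only at heq hle ⊢
  rw [← heq] at hle ⊢
  have hπ := hg.signedKey_lt_signedKey_of_inv (i := i) (j := j)
  by_cases hgij : g (π i) = g (π j)
  · have hs : s (f i) = s (g (π i)) := by
      by_contra hne
      exact hij.ne (card_le_one.1 (hcount _ _ hne) i (by simp) j (by simp [heq, hgij]))
    rw [← hgij] at hπ
    rcases Int.units_eq_one_or (s (f i)) with h | h
    · rw [signedKey_lt_iff_of_one h, Fin.val_fin_lt]
      exact hπ.1 ((signedKey_lt_iff_of_one (hs ▸ h)).2 hij)
    · rw [signedKey_lt_iff_of_neg_one h, Fin.val_fin_lt]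
      refine lt_of_le_of_ne (not_lt.1 fun hlt => ?_) (π.injective.ne hij.ne')
      exact hij.asymm ((signedKey_lt_iff_of_neg_one (hs ▸ h)).1 (hπ.2 hlt))
  · rcases Int.units_eq_one_or (s (f i)) with h | h <;>
      simp only [h, Units.val_one, Units.val_neg, one_mul, neg_mul, neg_le_neg_iff,
        Nat.cast_le, Fin.val_fin_le] at hle
    · rw [signedKey_lt_iff_of_one h, Fin.val_fin_lt]
      exact hg.monotone.reflect_lt (lt_of_le_of_ne hle hgij)
    · rw [signedKey_lt_iff_of_neg_one h, Fin.val_fin_lt]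
      exact hg.monotone.reflect_lt (lt_of_le_of_ne hle (Ne.symm hgij))

theorem exists_isCompatible_boxCount_eq {M : Fin m → Fin m → ℕ} (hsum : ∑ a, ∑ b, M a b = n)
    (hM : ∀ a b, s a ≠ s b → M a b ≤ 1) :
    ∃ (π : Equiv.Perm (Fin n)) (f g : Fin n → Fin m),
      IsCompatible s π f ∧ IsCompatible s π⁻¹ g ∧ boxCount π f g = M := by
  obtain ⟨h, hmono, hcard⟩ := exists_monotone_comp_card_fiber_eq
    (fun p : Fin m × Fin m => signedKey s p.1 p.2) (fun p => M p.1 p.2)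
    ((Fintype.sum_prod_type' M).trans hsum)
  obtain ⟨σ, hσ, -⟩ := existsUnique_isCompatible s fun i => (h i).2
  have hcount : boxCount σ⁻¹ (fun i => (h i).1) ((fun i => (h i).2) ∘ σ) = M := by
    funext a b
    simpa [boxCount, Prod.ext_iff] using hcard (a, b)
  exact ⟨σ⁻¹, fun i => (h i).1, (fun i => (h i).2) ∘ σ,
    isCompatible_of_monotone_signedKey (hcount ▸ hM) (by simpa [Function.comp_def] using hmono) hσ,
    hσ, hcount⟩

end BoxCount

theorem sum_sum_sym2Mk_eq {ι M : Type*} [Fintype ι] [DecidableEq ι] [AddCommMonoid M]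
    (φ : Sym2 ι → M) :
    ∑ a, ∑ b, φ s(a, b) = ∑ e : Sym2 ι, (if e.IsDiag then 1 else 2) • φ e := by
  rw [← Fintype.sum_prod_type', ← sum_fiberwise univ fun p : ι × ι => s(p.1, p.2)]
  refine sum_congr rfl fun e _ => ?_
  rw [sum_congr rfl fun p hp => by rw [(mem_filter.1 hp).2], sum_const]
  congr 1
  induction e using Sym2.ind with | _ a b
  by_cases hab : a = b
  · subst hab
    rw [if_pos (Sym2.mk_isDiag_iff.2 rfl), card_eq_one]
    exact ⟨(a, a), by ext ⟨x, y⟩; simp⟩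
  · rw [if_neg (by simpa using hab), card_eq_two]
    exact ⟨(a, b), (b, a), by simp [hab], by ext ⟨x, y⟩; simp⟩

section EdgeCount

variable {m n : ℕ} {s : Fin m → ℤˣ} {π π' : Equiv.Perm (Fin n)} {f f' : Fin n → Fin m}

/-- The number of positions of `π` whose box and whose letter's box form the edge `e`. If `π` is
an involution, a two-cycle of `π` joining distinct boxes is thus counted twice. -/
def edgeCount (π : Equiv.Perm (Fin n)) (f : Fin n → Fin m) (e : Sym2 (Fin m)) : ℕ :=
  #{i | s(f i, f (π i)) = e}

/-- The values which `edgeCount π f e` takes for an involution `π` and boxes `f` compatible with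
it: any value on a loop, and an even value on another edge, bounded by `2` if the signs of the two
ends differ. -/
def edgeMultiplicities {ι : Type*} (s : ι → ℤˣ) (e : Sym2 ι) : Set ℕ :=
  {k | e.IsDiag ∨ Even k ∧ ((e.map s).mul = 1 ∨ k ≤ 2)}

theorem sum_edgeCount (π : Equiv.Perm (Fin n)) (f : Fin n → Fin m) :
    ∑ e, edgeCount π f e = n := by
  simpa [edgeCount] using (card_eq_sum_card_fiberwise (s := univ) (t := univ)
    (f := fun i => s(f i, f (π i))) (by simp)).symm

theorem edgeCount_mk_self (a : Fin m) : edgeCount π f s(a, a) = boxCount π f f a a := by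
  simp [edgeCount, boxCount]

theorem boxCount_comm (hπ : π⁻¹ = π) (a b : Fin m) : boxCount π f f a b = boxCount π f f b a := by
  conv_lhs => rw [← hπ, boxCount_inv]

theorem edgeCount_mk_of_ne (hπ : π⁻¹ = π) {a b : Fin m} (hab : a ≠ b) :
    edgeCount π f s(a, b) = 2 * boxCount π f f a b := by
  have hsplit : edgeCount π f s(a, b) = boxCount π f f a b + boxCount π f f b a := by
    rw [edgeCount, boxCount, boxCount, ← card_union_of_disjoint
      (disjoint_filter.2 fun i _ hi hi' => hab (hi.1.symm.trans hi'.1)), ← filter_or]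
    simp
  rw [hsplit, boxCount_comm hπ b a, two_mul]

theorem boxCount_eq_of_edgeCount_eq (hπ : π⁻¹ = π) (hπ' : π'⁻¹ = π')
    (h : edgeCount π f = edgeCount π' f') : boxCount π f f = boxCount π' f' f' := by
  funext a b
  have hab := congrFun h s(a, b)
  rcases eq_or_ne a b with rfl | hne
  · rwa [edgeCount_mk_self, edgeCount_mk_self] at hab
  · rw [edgeCount_mk_of_ne hπ hne, edgeCount_mk_of_ne hπ' hne] at hab
    omega

theorem mul_map_mk_eq_one_iff {a b : Fin m} : (Sym2.map s s(a, b)).mul = 1 ↔ s a = s b := by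
  rw [Sym2.map_mk, Sym2.mul_mk, mul_eq_one_iff_eq_inv, Int.units_inv_eq_self]

theorem edgeCount_mem_edgeMultiplicities (hπ : π⁻¹ = π) (h : IsCompatible s π f)
    (e : Sym2 (Fin m)) : edgeCount π f e ∈ edgeMultiplicities s e := by
  induction e using Sym2.ind with | _ a b
  rcases eq_or_ne a b with rfl | hne
  · exact Or.inl rfl
  · rw [edgeCount_mk_of_ne hπ hne]
    refine Or.inr ⟨even_two_mul _, ?_⟩
    by_cases hab : s a = s b
    · exact Or.inl (mul_map_mk_eq_one_iff.2 hab)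
    · exact Or.inr (by simpa using boxCount_le_one h (hπ.symm ▸ h) hab)

theorem eq_of_edgeCount_eq (hπ : π⁻¹ = π) (hπ' : π'⁻¹ = π') (h : IsCompatible s π f)
    (h' : IsCompatible s π' f') (hcount : edgeCount π f = edgeCount π' f') :
    π = π' ∧ f = f' :=
  (eq_of_boxCount_eq h (hπ.symm ▸ h) h' (hπ'.symm ▸ h')
    (boxCount_eq_of_edgeCount_eq hπ hπ' hcount)).imp id And.left

theorem exists_isCompatible_boxCount_eq_of_symm {M : Fin m → Fin m → ℕ}
    (hsum : ∑ a, ∑ b, M a b = n) (hM : ∀ a b, s a ≠ s b → M a b ≤ 1)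
    (hsymm : ∀ a b, M a b = M b a) :
    ∃ (π : Equiv.Perm (Fin n)) (f : Fin n → Fin m),
      π⁻¹ = π ∧ IsCompatible s π f ∧ boxCount π f f = M := by
  obtain ⟨π, f, g, hf, hg, rfl⟩ := exists_isCompatible_boxCount_eq hsum hM
  obtain ⟨hπ, rfl, -⟩ := eq_of_boxCount_eq hg (by rwa [inv_inv]) hf hg <|
    funext₂ fun a b => (boxCount_inv a b).trans (hsymm b a)
  exact ⟨π, _, hπ, hf, rfl⟩

theorem exists_isCompatible_edgeCount_eq {l : Sym2 (Fin m) → ℕ} (hsum : ∑ e, l e = n)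
    (hl : ∀ e, l e ∈ edgeMultiplicities s e) :
    ∃ (π : Equiv.Perm (Fin n)) (f : Fin n → Fin m),
      π⁻¹ = π ∧ IsCompatible s π f ∧ edgeCount π f = l := by
  let μ (e : Sym2 (Fin m)) : ℕ := l e / if e.IsDiag then 1 else 2
  have hμ (e : Sym2 (Fin m)) : (if e.IsDiag then 1 else 2) * μ e = l e := by
    refine Nat.mul_div_cancel' ?_
    split_ifs with he
    · exact one_dvd _
    · exact ((hl e).resolve_left he).1.two_dvd
  have hle (a b : Fin m) (hab : s a ≠ s b) : μ s(a, b) ≤ 1 := by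
    have hdiag : ¬ s(a, b).IsDiag := fun h => hab (congrArg s (Sym2.mk_isDiag_iff.1 h))
    have h2 := ((hl _).resolve_left hdiag).2.resolve_left (mt mul_map_mk_eq_one_iff.1 hab)
    simp only [μ, if_neg hdiag]
    omega
  obtain ⟨π, f, hπ, h, hcount⟩ := exists_isCompatible_boxCount_eq_of_symm (s := s) (n := n)
    (M := fun a b => μ s(a, b)) ((sum_sum_sym2Mk_eq μ).trans (by simp only [smul_eq_mul, hμ, hsum]))
    hle fun a b => by rw [Sym2.eq_swap]
  refine ⟨π, f, hπ, h, funext fun e => ?_⟩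
  induction e using Sym2.ind with | _ a b
  rw [← hμ]
  rcases eq_or_ne a b with rfl | hne
  · rw [edgeCount_mk_self, hcount, if_pos (Sym2.mk_isDiag_iff.2 rfl), one_mul]
  · rw [edgeCount_mk_of_ne hπ hne, hcount, if_neg (by simpa using hne)]

theorem sum_invSet_card_isCompatible (n : ℕ) (s : Fin m → ℤˣ) :
    ∑ π ∈ invSet n, #{f | IsCompatible s π f}
      = #{l ∈ finsuppAntidiag univ n | ∀ e, l e ∈ edgeMultiplicities s e} := by
  have hinv {π : Equiv.Perm (Fin n)} : π ∈ invSet n ↔ π⁻¹ = π := by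
    rw [invSet, mem_filter_univ, sq, inv_eq_iff_mul_eq_one]
  rw [← card_sigma]
  refine card_bij (fun p _ => Finsupp.equivFunOnFinite.symm (edgeCount p.1 p.2)) ?_ ?_ ?_
  · rintro ⟨π, f⟩ hp
    rw [mem_sigma, hinv, mem_filter_univ] at hp
    rw [mem_filter, mem_finsuppAntidiag]
    exact ⟨⟨sum_edgeCount π f, subset_univ _⟩, edgeCount_mem_edgeMultiplicities hp.1 hp.2⟩
  · rintro ⟨π, f⟩ hp ⟨π', f'⟩ hp' heq
    rw [mem_sigma, hinv, mem_filter_univ] at hp hp'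
    obtain ⟨rfl, rfl⟩ := eq_of_edgeCount_eq hp.1 hp'.1 hp.2 hp'.2
      (Finsupp.equivFunOnFinite.symm.injective heq)
    rfl
  · intro l hl
    rw [mem_filter, mem_finsuppAntidiag] at hl
    obtain ⟨π, f, hπ, h, hcount⟩ := exists_isCompatible_edgeCount_eq hl.1.1 hl.2
    refine ⟨⟨π, f⟩, by simpa only [mem_sigma, hinv, mem_filter_univ] using ⟨hπ, h⟩, ?_⟩
    exact Finsupp.equivFunOnFinite.symm_apply_eq.2 hcount

end EdgeCount

open PowerSeries hiding mk

section Derivative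

variable {R : Type*} [CommRing R]

theorem derivative_eq_of_mul_eq_one {F P : R⟦X⟧} (h : F * P = 1) :
    d⁄dX R F = -(F ^ 2 * d⁄dX R P) := by
  have hderiv := congrArg (d⁄dX R) h
  rw [Derivation.leibniz, Derivation.map_one_eq_zero, smul_eq_mul, smul_eq_mul] at hderiv
  linear_combination F * hderiv - d⁄dX R F * h

theorem derivative_prod_eq_prod_mul_sum {ι : Type*} {F V : ι → R⟦X⟧}
    (h : ∀ i, d⁄dX R (F i) = F i * V i) (t : Finset ι) :
    d⁄dX R (∏ i ∈ t, F i) = (∏ i ∈ t, F i) * ∑ i ∈ t, V i := by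
  induction t using Finset.induction_on with
  | empty => simp
  | insert i t hi ih =>
    rw [prod_insert hi, sum_insert hi, Derivation.leibniz, ih, h, smul_eq_mul, smul_eq_mul]
    ring

end Derivative

section EdgeSeries

variable {ι R : Type*} [CommRing R]

/-- The generating function of the multiplicities an involution compatible with the signs `s` can
have along the edge `e`. -/
def edgeSeries (R : Type*) [CommRing R] (s : ι → ℤˣ) (e : Sym2 ι) : R⟦X⟧ :=
  PowerSeries.mk fun k => if k ∈ edgeMultiplicities s e then 1 else 0

/-- The logarithmic derivative of `edgeSeries R s e`. On a loop the product of the two signs is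
`1`, which gives the odd coefficients a common form for all edges. -/
def edgeLogDeriv (R : Type*) [CommRing R] [DecidableEq ι] (s : ι → ℤˣ) (e : Sym2 ι) : R⟦X⟧ :=
  (if e.IsDiag then 1 else 2) • PowerSeries.mk fun k =>
    if Even k then if e.IsDiag then 1 else 0 else (((e.map s).mul : ℤ) : R) ^ (k / 2)

theorem mk_even_mul_one_sub_C_mul_X_sq (c : R) :
    PowerSeries.mk (fun k => if Even k then c ^ (k / 2) else 0) * (1 - C c * X ^ 2) = 1 := by
  ext k
  rw [mul_sub, mul_one, mul_left_comm, map_sub, coeff_C_mul, coeff_mul_X_pow', coeff_one]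
  rcases k with _ | _ | k
  · simp
  · simp
  · have hdiv : (k + 1 + 1) / 2 = k / 2 + 1 := by omega
    simp [Nat.even_add_one, hdiv, pow_succ']

variable {s : ι → ℤˣ} {e : Sym2 ι}

theorem mul_map_eq_one_of_isDiag (he : e.IsDiag) : (e.map s).mul = 1 := by
  induction e using Sym2.ind with | _ a b
  rw [Sym2.mk_isDiag_iff.1 he, Sym2.map_mk, Sym2.mul_mk, Int.units_mul_self]

theorem derivative_edgeSeries_of_isDiag [DecidableEq ι] (he : e.IsDiag) :
    d⁄dX R (edgeSeries R s e) = edgeSeries R s e * edgeLogDeriv R s e := by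
  have hF : edgeSeries R s e = PowerSeries.mk 1 := by
    ext k
    simp [edgeSeries, edgeMultiplicities, he]
  have hV : edgeLogDeriv R s e = PowerSeries.mk 1 := by
    ext k
    simp [edgeLogDeriv, he, mul_map_eq_one_of_isDiag he]
  rw [hF, hV, derivative_eq_of_mul_eq_one (mk_one_mul_one_sub_eq_one R), map_sub,
    Derivation.map_one_eq_zero, derivative_X]
  ring

theorem edgeLogDeriv_of_not_isDiag [DecidableEq ι] (he : ¬ e.IsDiag) :
    edgeLogDeriv R s e = 2 * X * PowerSeries.mk fun k =>
      if Even k then (((e.map s).mul : ℤ) : R) ^ (k / 2) else 0 := by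
  ext k
  rw [edgeLogDeriv, if_neg he, mul_assoc, two_mul, two_smul, map_add, map_add]
  rcases k with _ | k
  · simp [he]
  · by_cases hk : Even k
    · have hdiv : (k + 1) / 2 = k / 2 := by grind
      simp [coeff_succ_X_mul, Nat.even_add_one, hk, hdiv]
    · simp [coeff_succ_X_mul, Nat.even_add_one, hk, he]

theorem derivative_edgeSeries_of_not_isDiag [DecidableEq ι] (he : ¬ e.IsDiag) :
    d⁄dX R (edgeSeries R s e) = edgeSeries R s e * edgeLogDeriv R s e := by
  have hinv := mk_even_mul_one_sub_C_mul_X_sq (((e.map s).mul : ℤ) : R)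
  rw [edgeLogDeriv_of_not_isDiag he]
  rcases Int.units_eq_one_or (e.map s).mul with h1 | h1 <;>
    simp only [h1, Units.val_one, Units.val_neg, Int.cast_one, Int.cast_neg, map_one, map_neg,
      one_pow, one_mul, neg_mul, sub_neg_eq_add] at hinv ⊢
  · have hF : edgeSeries R s e = PowerSeries.mk fun k => if Even k then 1 else 0 := by
      ext k
      simp [edgeSeries, edgeMultiplicities, he, h1]
    rw [hF, derivative_eq_of_mul_eq_one hinv, map_sub, Derivation.map_one_eq_zero, derivative_pow,
      derivative_X]
    push_cast
    ring
  · have hF : edgeSeries R s e = 1 + X ^ 2 := by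
      ext k
      rcases k with _ | _ | _ | k <;>
        simp [edgeSeries, edgeMultiplicities, he, h1, coeff_one, coeff_X_pow]
    rw [hF, map_add, Derivation.map_one_eq_zero, derivative_pow, derivative_X]
    push_cast
    linear_combination -2 * X * hinv

theorem derivative_edgeSeries [DecidableEq ι] (s : ι → ℤˣ) (e : Sym2 ι) :
    d⁄dX R (edgeSeries R s e) = edgeSeries R s e * edgeLogDeriv R s e := by
  by_cases he : e.IsDiag
  · exact derivative_edgeSeries_of_isDiag he
  · exact derivative_edgeSeries_of_not_isDiag he

variable [Fintype ι] [DecidableEq ι]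

theorem coeff_prod_edgeSeries (s : ι → ℤˣ) (n : ℕ) :
    coeff n (∏ e, edgeSeries R s e)
      = #{l ∈ finsuppAntidiag univ n | ∀ e, l e ∈ edgeMultiplicities s e} := by
  simp only [coeff_prod, edgeSeries, coeff_mk, prod_ite_zero, mem_univ, forall_const,
    prod_const_one, sum_boole]

theorem coeff_sum_edgeLogDeriv (s : ι → ℤˣ) (k : ℕ) :
    coeff k (∑ e, edgeLogDeriv R s e)
      = if 4 ∣ k + 1 then (∑ a, ((s a : ℤ) : R)) ^ 2
        else (Fintype.card ι : R) ^ (k + 1).gcd 2 := by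
  have hsum : coeff k (∑ e, edgeLogDeriv R s e) = ∑ a, ∑ b,
      if Even k then if a = b then 1 else 0
      else ((s a : ℤ) : R) ^ (k / 2) * ((s b : ℤ) : R) ^ (k / 2) := by
    simp only [map_sum, edgeLogDeriv, map_nsmul, coeff_mk]
    rw [← sum_sum_sym2Mk_eq]
    simp [mul_pow]
  rw [hsum]
  by_cases hk : Even k
  · have h4 : ¬ 4 ∣ k + 1 := by grind
    have hgcd : (k + 1).gcd 2 = 1 := Nat.coprime_two_right.2 hk.add_one
    simp [hk, h4, hgcd]
  · have hgcd : (k + 1).gcd 2 = 2 := Nat.gcd_eq_right (by grind)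
    simp only [hk, if_false, hgcd, ← mul_sum, ← sum_mul, ← sq]
    have hsq (a : ι) : ((s a : ℤ) : R) ^ 2 = 1 := by
      rw [← Int.cast_pow, ← Units.val_pow_eq_pow_val, Int.units_sq, Units.val_one, Int.cast_one]
    split_ifs with h4
    · obtain ⟨j, hj⟩ : Odd (k / 2) := by grind
      simp only [hj, pow_succ, pow_mul, hsq, one_pow, one_mul]
    · obtain ⟨j, hj⟩ : Even (k / 2) := by grind
      simp [hj, ← two_mul, pow_mul, hsq]

end EdgeSeries

section CycleType

variable {α : Type*} [Fintype α] [DecidableEq α]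

theorem minimalPeriod_eq_card_support_of_mem_cycleFactorsFinset {σ c : Equiv.Perm α}
    (hc : c ∈ σ.cycleFactorsFinset) {i : α} (hi : i ∈ c.support) :
    Function.minimalPeriod σ i = #c.support := by
  have hcyc : c.IsCycle := (Equiv.Perm.mem_cycleFactorsFinset_iff.1 hc).1
  refine Nat.dvd_left_injective (funext fun k => propext ?_)
  change _ ∣ k ↔ _ ∣ k
  rw [← Function.isPeriodicPt_iff_minimalPeriod_dvd, ← hcyc.orderOf, orderOf_dvd_iff_pow_eq_one,
    hcyc.pow_eq_one_iff' (Equiv.Perm.mem_support.1 hi), Equiv.Perm.cycle_is_cycleOf hi hc,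
    Equiv.Perm.cycleOf_pow_apply_self, Function.IsPeriodicPt, Function.IsFixedPt,
    ← Equiv.Perm.coe_pow]

theorem filter_cycleOf_eq {σ c : Equiv.Perm α} (hc : c ∈ σ.cycleFactorsFinset) :
    {i ∈ σ.support | σ.cycleOf i = c} = c.support := by
  ext i
  rw [mem_filter]
  refine ⟨?_, fun hi => ⟨Equiv.Perm.mem_cycleFactorsFinset_support_le hc hi,
    (Equiv.Perm.cycle_is_cycleOf hi hc).symm⟩⟩
  rintro ⟨hi, rfl⟩
  exact Equiv.Perm.mem_support_cycleOf_iff.2 ⟨Equiv.Perm.SameCycle.refl _ _, hi⟩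

theorem sum_parts_partition_eq_sum_minimalPeriod {M : Type*} [AddCommMonoid M]
    (σ : Equiv.Perm α) (g : ℕ → M) :
    (σ.partition.parts.map fun p => p • g p).sum = ∑ i, g (Function.minimalPeriod σ i) := by
  rw [Equiv.Perm.parts_partition, Multiset.map_add, Multiset.sum_add,
    ← sum_add_sum_compl σ.support]
  congr 1
  · rw [← sum_fiberwise_of_maps_to (t := σ.cycleFactorsFinset) (g := σ.cycleOf)
      fun i hi => Equiv.Perm.cycleOf_mem_cycleFactorsFinset_iff.2 hi,
      Equiv.Perm.cycleType_def, Multiset.map_map]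
    refine sum_congr rfl fun c hc => ?_
    rw [filter_cycleOf_eq hc, sum_congr rfl fun i hi => by
      rw [minimalPeriod_eq_card_support_of_mem_cycleFactorsFinset hc hi], sum_const]
    rfl
  · have hfix (i : α) (hi : i ∈ σ.supportᶜ) : Function.minimalPeriod σ i = 1 :=
      Function.minimalPeriod_eq_one_iff_isFixedPt.2
        (Equiv.Perm.notMem_support.1 (mem_compl.1 hi))
    rw [sum_congr rfl fun i hi => by rw [hfix i hi], sum_const, card_compl]
    simp

theorem eq_of_sum_map_smul_eq {s t : Multiset ℕ} (hs : ∀ a ∈ s, 0 < a) (ht : ∀ a ∈ t, 0 < a)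
    (h : ∀ g : ℕ → ℕ, (s.map fun p => p • g p).sum = (t.map fun p => p • g p).sum) : s = t := by
  have hcount (u : Multiset ℕ) (a : ℕ) :
      (u.map fun p => p • if p = a then 1 else 0).sum = a * u.count a := by
    induction u using Multiset.induction with
    | empty => simp
    | cons b u ih => grind [Multiset.map_cons, Multiset.sum_cons, Multiset.count_cons]
  ext a
  obtain rfl | ha := Nat.eq_zero_or_pos a
  · rw [Multiset.count_eq_zero_of_notMem fun h0 => (hs 0 h0).false,
      Multiset.count_eq_zero_of_notMem fun h0 => (ht 0 h0).false]
  · exact Nat.eq_of_mul_eq_mul_left ha (by rw [← hcount, ← hcount, h])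

theorem parts_partition_pow (σ : Equiv.Perm α) (k : ℕ) :
    (σ ^ k).partition.parts
      = σ.partition.parts.bind fun p => Multiset.replicate (p.gcd k) (p / p.gcd k) := by
  have hperiod (i : α) : Function.minimalPeriod (σ ^ k : Equiv.Perm α) i
      = Function.minimalPeriod σ i / (Function.minimalPeriod σ i).gcd k := by
    rw [Equiv.Perm.coe_pow]
    exact Function.minimalPeriod_iterate_eq_div_gcd'
      (Function.mem_periodicPts.2 ⟨orderOf σ, orderOf_pos σ, by
        rw [Function.IsPeriodicPt, Function.IsFixedPt, ← Equiv.Perm.coe_pow, pow_orderOf_eq_one,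
          Equiv.Perm.one_apply]⟩)
  refine eq_of_sum_map_smul_eq (fun a ha => (σ ^ k).partition.parts_pos ha) ?_ fun g => ?_
  · simp only [Multiset.mem_bind, Multiset.mem_replicate]
    rintro _ ⟨p, hp, -, rfl⟩
    exact Nat.div_gcd_pos_of_pos_left k (σ.partition.parts_pos hp)
  · simp only [sum_parts_partition_eq_sum_minimalPeriod, hperiod, Multiset.map_bind,
      Multiset.sum_bind, Multiset.map_replicate, Multiset.sum_replicate]
    rw [← sum_parts_partition_eq_sum_minimalPeriod σ fun p => g (p / p.gcd k)]
    simp only [smul_eq_mul, ← mul_assoc, Nat.mul_div_cancel' (Nat.gcd_dvd_left _ k)]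

end CycleType

theorem fullCycleType_eq {n : ℕ} (σ : Equiv.Perm (Fin n)) :
    fullCycleType n σ = σ.partition.parts := by
  rw [Equiv.Perm.parts_partition, Fintype.card_fin, fullCycleType]

theorem numCycles_sq {n : ℕ} (σ : Equiv.Perm (Fin n)) :
    numCycles n (σ ^ 2) = (σ.partition.parts.map fun p => p.gcd 2).sum := by
  simp [numCycles, fullCycleType_eq, parts_partition_pow]

theorem numOddCycles_sq {n : ℕ} (σ : Equiv.Perm (Fin n)) :
    numOddCycles n (σ ^ 2)
      = (σ.partition.parts.map fun p => if 4 ∣ p then 0 else p.gcd 2).sum := by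
  have hodd (p : ℕ) : p / p.gcd 2 % 2 = 1 ↔ ¬ 4 ∣ p := by
    obtain h | h := Nat.mod_two_eq_zero_or_one p
    · rw [Nat.gcd_eq_right (Nat.dvd_of_mod_eq_zero h)]
      lia
    · rw [(Nat.coprime_two_right.2 (Nat.odd_iff.2 h)).gcd_eq_one]
      lia
  rw [numOddCycles, fullCycleType_eq, parts_partition_pow, Multiset.filter_bind,
    Multiset.card_bind]
  refine congrArg Multiset.sum (Multiset.map_congr rfl fun p _ => ?_)
  rw [Function.comp_apply]
  split_ifs with h4
  · rw [Multiset.filter_eq_nil.2 fun a ha => by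
      rwa [Multiset.eq_of_mem_replicate ha, hodd, not_not], Multiset.card_zero]
  · rw [Multiset.filter_eq_self.2 fun a ha => by
      rwa [Multiset.eq_of_mem_replicate ha, hodd], Multiset.card_replicate]

section CycleIndex

/-- The order `z_μ = ∏ j, j ^ m_j * m_j !` of the centralizer of a permutation with cycle lengths
`s`, fixed points included. -/
def centralizerOrder (s : Multiset ℕ) : ℕ :=
  s.prod * ∏ j ∈ s.toFinset, (s.count j).factorial

theorem centralizerOrder_cons (k : ℕ) (s : Multiset ℕ) :
    centralizerOrder (k ::ₘ s) = k * (s.count k + 1) * centralizerOrder s := by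
  have hinsert : ∏ j ∈ s.toFinset, (s.count j).factorial
      = ∏ j ∈ insert k s.toFinset, (s.count j).factorial :=
    prod_subset (subset_insert _ _) fun j _ hj => by
      rw [Multiset.count_eq_zero_of_notMem (by simpa using hj), Nat.factorial_zero]
  have herase : ∏ j ∈ (insert k s.toFinset).erase k, ((k ::ₘ s).count j).factorial
      = ∏ j ∈ (insert k s.toFinset).erase k, (s.count j).factorial :=
    prod_congr rfl fun j hj => by rw [Multiset.count_cons_of_ne (ne_of_mem_erase hj)]
  rw [centralizerOrder, centralizerOrder, hinsert, Multiset.toFinset_cons, Multiset.prod_cons,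
    ← mul_prod_erase _ _ (mem_insert_self k _), herase, Multiset.count_cons_self,
    ← mul_prod_erase _ (fun j => (s.count j).factorial) (mem_insert_self k _),
    Nat.factorial_succ]
  ring

theorem centralizerOrder_ne_zero {s : Multiset ℕ} (hs : ∀ a ∈ s, 0 < a) :
    centralizerOrder s ≠ 0 :=
  (Nat.mul_pos (Multiset.prod_pos hs) (prod_pos fun _ _ => Nat.factorial_pos _)).ne'

theorem centralizerOrder_add_replicate_one {s : Multiset ℕ} (hs : 1 ∉ s) (r : ℕ) :
    centralizerOrder (s + Multiset.replicate r 1) = r.factorial * centralizerOrder s := by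
  induction r with
  | zero => simp
  | succ r ih =>
    rw [Multiset.replicate_succ, Multiset.add_cons, centralizerOrder_cons, ih, Multiset.count_add,
      Multiset.count_eq_zero_of_notMem hs, Multiset.count_replicate_self, Nat.factorial_succ]
    ring

theorem card_partition_eq_mul_centralizerOrder {α : Type*} [Fintype α] [DecidableEq α]
    (μ : (Fintype.card α).Partition) :
    #{σ : Equiv.Perm α | σ.partition = μ} * centralizerOrder μ.parts
      = (Fintype.card α).factorial := by
  set s := μ.parts.filter (2 ≤ ·)
  have hs (a) (ha : a ∈ s) : 2 ≤ a := (Multiset.mem_filter.1 ha).2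
  have hparts : μ.parts = s + Multiset.replicate (μ.parts.count 1) 1 := by
    rw [← Multiset.filter_eq', ← Multiset.filter_congr (p := fun a => ¬ 2 ≤ a) fun a ha => ?_,
      Multiset.filter_add_not]
    have := μ.parts_pos ha
    lia
  have hsum : Fintype.card α = s.sum + μ.parts.count 1 := by
    conv_lhs => rw [← μ.parts_sum, hparts]
    simp
  have hcount : Fintype.card α - s.sum = μ.parts.count 1 := Nat.sub_eq_of_eq_add' hsum
  have hcycleType (σ : Equiv.Perm α) : σ.partition = μ ↔ σ.cycleType = s := by
    refine ⟨fun h => by rw [← Equiv.Perm.filter_parts_partition_eq_cycleType, h], fun h => ?_⟩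
    rw [Nat.Partition.ext_iff, Equiv.Perm.parts_partition, ← Equiv.Perm.sum_cycleType, h, hparts,
      hcount]
  have hcard := Equiv.Perm.card_of_cycleType_mul_eq α s
  rw [if_pos ⟨by lia, hs⟩, hcount, mul_assoc _ s.prod] at hcard
  rw [hparts, centralizerOrder_add_replicate_one fun h => absurd (hs 1 h) (by decide)]
  simpa only [hcycleType, centralizerOrder] using hcard

end CycleIndex

section ExponentialFormula

variable {K : Type*} [Field K] [CharZero K]

/-- The total weight of the permutations of `Fin n`, where a permutation weighs the product of
`w k` over its cycle lengths `k`, fixed points included. -/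
def cycleWeightSum (w : ℕ → K) (n : ℕ) : K :=
  ∑ σ : Equiv.Perm (Fin n), (σ.partition.parts.map w).prod

/-- The contribution to `cycleWeightSum w n / n !` of the permutations with cycle lengths `s`. -/
def cycleTypeWeight (w : ℕ → K) (s : Multiset ℕ) : K :=
  (s.map w).prod / centralizerOrder s

theorem mul_cycleTypeWeight_cons (w : ℕ → K) {s : Multiset ℕ} (hs : ∀ a ∈ s, 0 < a) {k : ℕ}
    (hk : 0 < k) :
    (k * (k ::ₘ s).count k : K) * cycleTypeWeight w (k ::ₘ s) = w k * cycleTypeWeight w s := by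
  have hz : (centralizerOrder s : K) ≠ 0 := Nat.cast_ne_zero.2 (centralizerOrder_ne_zero hs)
  have hk' : (k : K) ≠ 0 := Nat.cast_ne_zero.2 hk.ne'
  have hcount : (s.count k + 1 : K) ≠ 0 := Nat.cast_add_one_ne_zero _
  rw [cycleTypeWeight, cycleTypeWeight, centralizerOrder_cons, Multiset.map_cons,
    Multiset.prod_cons, Multiset.count_cons_self]
  push_cast
  field_simp

theorem sum_prod_map_parts_partition_div_factorial {α : Type*} [Fintype α] [DecidableEq α]
    (w : ℕ → K) {n : ℕ} (hn : Fintype.card α = n) :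
    (∑ σ : Equiv.Perm α, (σ.partition.parts.map w).prod) / n.factorial
      = ∑ μ : n.Partition, cycleTypeWeight w μ.parts := by
  subst hn
  rw [← sum_fiberwise univ Equiv.Perm.partition, sum_div]
  refine sum_congr rfl fun μ _ => ?_
  have hz : (centralizerOrder μ.parts : K) ≠ 0 :=
    Nat.cast_ne_zero.2 (centralizerOrder_ne_zero fun _ => μ.parts_pos)
  have hcard : (#{σ : Equiv.Perm α | σ.partition = μ} : K) * centralizerOrder μ.parts
      = (Fintype.card α).factorial := mod_cast card_partition_eq_mul_centralizerOrder μ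
  have hfactorial : ((Fintype.card α).factorial : K) ≠ 0 :=
    Nat.cast_ne_zero.2 (Nat.factorial_ne_zero _)
  rw [sum_congr rfl fun σ hσ => by rw [(mem_filter.1 hσ).2], sum_const, nsmul_eq_mul,
    cycleTypeWeight, div_eq_div_iff hfactorial hz, ← hcard]
  ring

theorem cycleWeightSum_div_factorial (w : ℕ → K) (n : ℕ) :
    cycleWeightSum w n / n.factorial = ∑ μ : n.Partition, cycleTypeWeight w μ.parts :=
  sum_prod_map_parts_partition_div_factorial w (Fintype.card_fin n)

theorem sum_partition_count_mul_cycleTypeWeight (w : ℕ → K) {n k : ℕ} (hk : 1 ≤ k)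
    (hkn : k ≤ n) :
    ∑ μ : n.Partition, (k * μ.parts.count k : K) * cycleTypeWeight w μ.parts
      = w k * (cycleWeightSum w (n - k) / (n - k).factorial) := by
  rw [cycleWeightSum_div_factorial, mul_sum,
    ← sum_filter_of_ne (p := fun μ : n.Partition => k ∈ μ.parts),
    sum_subtype _ (fun μ => mem_filter_univ μ),
    ← (Nat.Partition.partitionWithPartEquiv hk hkn).symm.sum_comp]
  · refine sum_congr rfl fun ν _ => ?_
    rw [Nat.Partition.partitionWithPartEquiv_symm_apply_parts,
      mul_cycleTypeWeight_cons w (fun _ => ν.parts_pos) hk]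
  · intro μ _ hμ
    by_contra hmem
    simp [Multiset.count_eq_zero_of_notMem hmem] at hμ

theorem sum_range_mul_count_parts {n : ℕ} (μ : n.Partition) :
    ∑ j ∈ range n, (j + 1) * μ.parts.count (j + 1) = n := by
  conv_rhs => rw [← μ.parts_sum, sum_multiset_count_of_subset μ.parts (range (n + 1)) fun a ha =>
    mem_range_succ_iff.2 (μ.le_of_mem_parts (Multiset.mem_toFinset.1 ha)), sum_range_succ']
  simp [mul_comm]

/-- The exponential generating function of the weights `cycleWeightSum w n`. -/
def cycleWeightSeries (w : ℕ → K) : K⟦X⟧ :=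
  PowerSeries.mk fun n => cycleWeightSum w n / n.factorial

theorem derivative_cycleWeightSeries (w : ℕ → K) :
    d⁄dX K (cycleWeightSeries w)
      = cycleWeightSeries w * PowerSeries.mk fun k => w (k + 1) := by
  ext n
  rw [coeff_derivative, mul_comm (cycleWeightSeries w), coeff_mul,
    Nat.sum_antidiagonal_eq_sum_range_succ_mk]
  simp only [cycleWeightSeries, coeff_mk]
  have hstep (j : ℕ) (hj : j ∈ range (n + 1)) :
      ∑ μ : (n + 1).Partition,
          ((j + 1 : ℕ) * μ.parts.count (j + 1) : K) * cycleTypeWeight w μ.parts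
        = w (j + 1) * (cycleWeightSum w (n - j) / (n - j).factorial) := by
    rw [sum_partition_count_mul_cycleTypeWeight w (Nat.succ_pos j) (mem_range.1 hj),
      Nat.add_sub_add_right]
  rw [cycleWeightSum_div_factorial, ← sum_congr rfl hstep, sum_comm, sum_mul]
  refine sum_congr rfl fun μ _ => ?_
  rw [← sum_mul, mul_comm (cycleTypeWeight w μ.parts)]
  congr 1
  exact_mod_cast (sum_range_mul_count_parts μ).symm

theorem constantCoeff_cycleWeightSeries (w : ℕ → K) :
    constantCoeff (cycleWeightSeries w) = 1 := by
  rw [← coeff_zero_eq_constantCoeff_apply, cycleWeightSeries, coeff_mk,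
    cycleWeightSum_div_factorial]
  simp [cycleTypeWeight, centralizerOrder]

theorem eq_of_derivative_eq_mul {F G V : K⟦X⟧} (hF : d⁄dX K F = F * V) (hG : d⁄dX K G = G * V)
    (hF₀ : constantCoeff F = 1) (hG₀ : constantCoeff G = 1) : F = G := by
  have hinv : G * G⁻¹ = 1 := PowerSeries.mul_inv_cancel G (by simp [hG₀])
  have hratio : F * G⁻¹ = 1 := by
    refine PowerSeries.derivative.ext ?_ (by simp [hF₀, hG₀])
    rw [Derivation.leibniz, derivative_inv', hF, hG, Derivation.map_one_eq_zero, smul_eq_mul,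
      smul_eq_mul]
    linear_combination - F * V * G⁻¹ * hinv
  linear_combination G * hratio - F * hinv

theorem prod_edgeSeries_eq_cycleWeightSeries {ι : Type*} [Fintype ι] (s : ι → ℤˣ) :
    ∏ e, edgeSeries K s e = cycleWeightSeries fun k =>
      if 4 ∣ k then (∑ a, ((s a : ℤ) : K)) ^ 2 else (Fintype.card ι : K) ^ k.gcd 2 := by
  refine eq_of_derivative_eq_mul (derivative_prod_eq_prod_mul_sum (derivative_edgeSeries s) _) ?_
    ?_ (constantCoeff_cycleWeightSeries _)
  · rw [derivative_cycleWeightSeries]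
    congr 1
    ext k
    rw [coeff_mk, coeff_sum_edgeLogDeriv]
  · rw [map_prod]
    refine prod_eq_one fun e _ => ?_
    rw [← coeff_zero_eq_constantCoeff_apply, edgeSeries, coeff_mk]
    exact if_pos (.inr ⟨.zero, .inr zero_le_two⟩)

theorem sum_invSet_card_isCompatible_eq_cycleWeightSum {m : ℕ} (s : Fin m → ℤˣ) (n : ℕ) :
    (n.factorial : K) * ∑ π ∈ invSet n, (#{f | IsCompatible s π f} : K)
      = cycleWeightSum (fun k => if 4 ∣ k then (∑ a, ((s a : ℤ) : K)) ^ 2 else m ^ k.gcd 2) n := by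
  rw [← Nat.cast_sum, sum_invSet_card_isCompatible, ← coeff_prod_edgeSeries,
    prod_edgeSeries_eq_cycleWeightSeries, cycleWeightSeries, coeff_mk, Fintype.card_fin,
    mul_div_cancel₀ _ (Nat.cast_ne_zero.2 n.factorial_ne_zero)]

end ExponentialFormula

section TieChain

/-- A weakly increasing word whose letters at positions `i` and `i + 1` may both equal `v` only
if `Q i v`. -/
def IsTieChain (Q : ℕ → ℕ → Prop) {n m : ℕ} (f : Fin (n + 1) → Fin m) : Prop :=
  ∀ i : Fin n, f i.castSucc < f i.succ ∨ f i.castSucc = f i.succ ∧ Q i (f i.castSucc)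

/-- The number of words of length `n + 1` satisfying `IsTieChain Q` whose last letter is `v`. -/
def tieChainCount (Q : ℕ → ℕ → Prop) : ℕ → ℕ → ℕ
  | 0, _ => 1
  | n + 1, v => ∑ u ∈ range v, tieChainCount Q n u + if Q n v then tieChainCount Q n v else 0

variable {Q : ℕ → ℕ → Prop} {n m : ℕ}

theorem isTieChain_snoc (g : Fin (n + 1) → Fin m) (v : Fin m) :
    IsTieChain Q (Fin.snoc g v : Fin (n + 1 + 1) → Fin m) ↔ IsTieChain Q g ∧
      (g (Fin.last n) < v ∨ g (Fin.last n) = v ∧ Q n v) := by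
  rw [IsTieChain, Fin.forall_fin_succ']
  refine and_congr (forall_congr' fun i => ?_) ?_
  · rw [← Fin.castSucc_succ, Fin.snoc_castSucc, Fin.snoc_castSucc, Fin.val_castSucc]
  · rw [Fin.snoc_castSucc, Fin.succ_last, Fin.snoc_last, Fin.val_last]
    grind

theorem sum_tieChainCount_mul_ite {v : ℕ} (hv : v < m) (x : ℕ) :
    ∑ u ∈ range m, tieChainCount Q n u * (if u < v ∨ u = v ∧ Q n v then x else 0)
      = tieChainCount Q (n + 1) v * x := by
  have hsplit (u : ℕ) : tieChainCount Q n u * (if u < v ∨ u = v ∧ Q n v then x else 0)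
      = (if u < v then tieChainCount Q n u else 0) * x
        + (if u = v then if Q n v then tieChainCount Q n v else 0 else 0) * x := by
    grind
  have hrange : {u ∈ range m | u < v} = range v := by
    grind
  rw [sum_congr rfl fun u _ => hsplit u, sum_add_distrib, ← sum_mul, ← sum_mul, ← add_mul,
    ← sum_filter, hrange, sum_ite_eq', if_pos (mem_range.2 hv), tieChainCount]

theorem sum_isTieChain (Q : ℕ → ℕ → Prop) (n m : ℕ) (φ : ℕ → ℕ) :
    ∑ f : Fin (n + 1) → Fin m with IsTieChain Q f, φ (f (Fin.last n))
      = ∑ v ∈ range m, tieChainCount Q n v * φ v := by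
  induction n generalizing φ with
  | zero =>
    rw [filter_true_of_mem fun f _ i => i.elim0, ← Fin.sum_univ_eq_sum_range,
      ← (Equiv.funUnique (Fin 1) (Fin m)).sum_comp]
    simp [tieChainCount, Equiv.funUnique]
  | succ n ih =>
    calc ∑ f : Fin (n + 1 + 1) → Fin m with IsTieChain Q f, φ (f (Fin.last (n + 1)))
        = ∑ v : Fin m, ∑ g : Fin (n + 1) → Fin m with IsTieChain Q g,
            if g (Fin.last n) < v ∨ g (Fin.last n) = v ∧ Q n v then φ v else 0 := by
          simp only [sum_filter, ← ite_and]
          rw [← (Fin.snocEquiv fun _ => Fin m).sum_comp, Fintype.sum_prod_type]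
          refine sum_congr rfl fun v _ => sum_congr rfl fun g _ => ?_
          exact if_ctx_congr (isTieChain_snoc g v) (fun _ => by simp) fun _ => rfl
      _ = ∑ v : Fin m, ∑ u ∈ range m, tieChainCount Q n u *
            if u < v ∨ u = v ∧ Q n v then φ v else 0 := by
          simp only [Fin.lt_def, Fin.ext_iff, ← ih]
      _ = ∑ v : Fin m, tieChainCount Q (n + 1) v * φ v :=
          sum_congr rfl fun v _ => sum_tieChainCount_mul_ite v.isLt (φ v)
      _ = ∑ v ∈ range m, tieChainCount Q (n + 1) v * φ v :=
          Fin.sum_univ_eq_sum_range (fun v => tieChainCount Q (n + 1) v * φ v) m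

theorem card_isTieChain (Q : ℕ → ℕ → Prop) (n m : ℕ) :
    #{f : Fin (n + 1) → Fin m | IsTieChain Q f} = ∑ v ∈ range m, tieChainCount Q n v := by
  simpa using sum_isTieChain Q n m 1

end TieChain

section TieChainSeries

variable {R : Type*} [CommRing R]

theorem one_sub_X_mul_mk_sum_range (a : ℕ → R) :
    (1 - X) * PowerSeries.mk (fun v => ∑ u ∈ range v, a u) = X * PowerSeries.mk a := by
  ext (_ | k)
  · simp
  · simp [sub_mul, coeff_succ_X_mul, sum_range_succ]

/-- The generating function of `tieChainCount Q n`. -/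
def tieChainSeries (R : Type*) [CommRing R] (Q : ℕ → ℕ → Prop) (n : ℕ) : R⟦X⟧ :=
  PowerSeries.mk fun v => (tieChainCount Q n v : R)

theorem one_sub_X_mul_mk_card_isTieChain (Q : ℕ → ℕ → Prop) (n : ℕ) :
    (1 - X) * PowerSeries.mk (fun m => (#{f : Fin (n + 1) → Fin m | IsTieChain Q f} : R))
      = X * tieChainSeries R Q n := by
  simp only [card_isTieChain, Nat.cast_sum, one_sub_X_mul_mk_sum_range, tieChainSeries]

theorem one_sub_X_mul_tieChainSeries_zero (Q : ℕ → ℕ → Prop) :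
    (1 - X) * tieChainSeries R Q 0 = 1 := by
  have hone : tieChainSeries R Q 0 = PowerSeries.mk 1 := by
    ext v
    simp [tieChainSeries, tieChainCount]
  rw [hone, mul_comm, PowerSeries.mk_one_mul_one_sub_eq_one]

theorem one_sub_X_mul_tieChainSeries_succ (Q : ℕ → ℕ → Prop) (n : ℕ) [DecidablePred (Q n)] :
    (1 - X) * tieChainSeries R Q (n + 1)
      = X * tieChainSeries R Q n
        + (1 - X) * PowerSeries.mk fun v => if Q n v then (tieChainCount Q n v : R) else 0 := by
  rw [tieChainSeries, tieChainSeries, ← one_sub_X_mul_mk_sum_range, ← mul_add]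
  congr 1
  ext v
  simp [tieChainCount]

theorem one_sub_X_pow_mul_tieChainSeries_not (p : ℕ → Prop) (n : ℕ) :
    (1 - X) ^ (n + 1) * tieChainSeries R (fun i _ => ¬ p i) n = X ^ Nat.count p n := by
  induction n with
  | zero => simpa using one_sub_X_mul_tieChainSeries_zero _
  | succ n ih =>
    have hstep := one_sub_X_mul_tieChainSeries_succ (R := R) (fun i _ => ¬ p i) n
    rw [Nat.count_succ]
    by_cases hp : p n
    · have hzero : PowerSeries.mk (fun _ : ℕ => (0 : R)) = 0 := rfl
      simp only [hp, not_true, if_false, hzero] at hstep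
      rw [if_pos hp]
      linear_combination (1 - X) ^ (n + 1) * hstep + X * ih
    · simp only [hp, not_false_eq_true, if_true, tieChainSeries] at hstep
      rw [if_neg hp]
      rw [tieChainSeries] at ih ⊢
      linear_combination (1 - X) ^ (n + 1) * hstep + ih

theorem two_mul_mk_ite_even_add (b : ℕ → R) (c : ℕ) :
    2 * PowerSeries.mk (fun v => if Even (v + c) then b v else 0)
      = PowerSeries.mk b + (-1) ^ c * rescale (-1) (PowerSeries.mk b) := by
  have hC (c : ℕ) : (-1 : R⟦X⟧) ^ c = C ((-1) ^ c) := by simp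
  ext v
  rw [two_mul, hC, map_add, map_add, coeff_C_mul, coeff_rescale, coeff_mk, coeff_mk, ← mul_assoc,
    ← pow_add, add_comm c]
  split_ifs with h
  · rw [h.neg_one_pow, one_mul]
  · rw [(Nat.not_even_iff_odd.1 h).neg_one_pow]
    ring

/-- The numerator `(2X)^c (1 + X^2)^(n - c)` of the generating function of the alternating tie
chains of length `n + 1` in which `c` of the `n` steps change direction. -/
def turnMonomial (R : Type*) [CommRing R] (n c : ℕ) : R⟦X⟧ :=
  (2 * X) ^ c * (1 + X ^ 2) ^ (n - c)

theorem turnMonomial_succ_succ (n c : ℕ) :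
    turnMonomial R (n + 1) (c + 1) = 2 * X * turnMonomial R n c := by
  rw [turnMonomial, turnMonomial, Nat.add_sub_add_right]
  ring

theorem turnMonomial_succ_left {n c : ℕ} (h : c ≤ n) :
    turnMonomial R (n + 1) c = (1 + X ^ 2) * turnMonomial R n c := by
  rw [turnMonomial, turnMonomial, Nat.succ_sub h, pow_succ (1 + X ^ 2)]
  ring

theorem rescale_neg_one_turnMonomial (n c : ℕ) :
    rescale (-1) (turnMonomial R n c) = (-1) ^ c * turnMonomial R n c := by
  rw [turnMonomial]
  simp only [map_mul, map_pow, map_add, map_one, map_ofNat, rescale_X, map_neg, neg_one_mul, neg_sq]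
  rw [mul_neg, neg_pow, mul_assoc]

variable [IsDomain R] [CharZero R]

theorem one_sub_X_sq_pow_mul_mk_ite_even {L : ℕ → R} {n c c' : ℕ}
    (hL : (1 - X ^ 2) ^ (n + 1) * PowerSeries.mk L = (1 + X) * turnMonomial R n c)
    (hc : c' = c ∨ c' = c + 1) :
    (1 - X ^ 2) ^ (n + 1) * PowerSeries.mk (fun v => if Even (v + c') then L v else 0)
      = turnMonomial R n c * if c' = c then 1 else X := by
  have hrescale : (1 - X ^ 2) ^ (n + 1) * rescale (-1) (PowerSeries.mk L)
      = (1 - X) * ((-1) ^ c * turnMonomial R n c) := by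
    have h := congrArg (rescale (-1)) hL
    simp only [map_mul, rescale_neg_one_turnMonomial, map_pow, map_sub, map_add, map_one,
      rescale_X, map_neg, neg_one_mul, neg_sq] at h
    linear_combination h
  have hsign : ((-1) ^ c * (-1) ^ c : R⟦X⟧) = 1 := by rw [← mul_pow, neg_one_mul, neg_neg, one_pow]
  have htwo : (2 : R⟦X⟧) ≠ 0 := by
    rw [← map_ofNat (C (R := R))]
    exact (map_ne_zero_iff _ C_injective).2 two_ne_zero
  refine mul_left_cancel₀ htwo ?_
  have hhalf := two_mul_mk_ite_even_add L c'
  rcases hc with rfl | rfl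
  · rw [if_pos rfl]
    linear_combination (1 - X ^ 2) ^ (n + 1) * hhalf + hL + (-1) ^ c' * hrescale
      + (1 - X) * turnMonomial R n c' * hsign
  · rw [if_neg (Nat.succ_ne_self c)]
    linear_combination (1 - X ^ 2) ^ (n + 1) * hhalf + hL + (-1) ^ (c + 1) * hrescale
      - (1 - X) * turnMonomial R n c * hsign

theorem one_sub_X_sq_pow_mul_tieChainSeries_even (p : ℕ → Prop) (n : ℕ) :
    (1 - X ^ 2) ^ (n + 1) * tieChainSeries R (fun i v => Even (v + Nat.count p (i + 1))) n
      = (1 + X) * turnMonomial R n (Nat.count p n) := by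
  induction n with
  | zero =>
    rw [Nat.count_zero, turnMonomial]
    linear_combination (1 + X) * one_sub_X_mul_tieChainSeries_zero (R := R)
      fun i v => Even (v + Nat.count p (i + 1))
  | succ n ih =>
    have hstep := one_sub_X_mul_tieChainSeries_succ (R := R)
      (fun i v => Even (v + Nat.count p (i + 1))) n
    have hcount :
        Nat.count p (n + 1) = Nat.count p n ∨ Nat.count p (n + 1) = Nat.count p n + 1 := by
      rw [Nat.count_succ]
      split_ifs <;> simp
    have htie := one_sub_X_sq_pow_mul_mk_ite_even ih hcount
    have hturn : turnMonomial R (n + 1) (Nat.count p (n + 1))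
        = (if Nat.count p (n + 1) = Nat.count p n then 1 + X ^ 2 else 2 * X)
          * turnMonomial R n (Nat.count p n) := by
      obtain hc | hc := hcount
      · rw [if_pos hc, hc, turnMonomial_succ_left (Nat.count_le ..)]
      · rw [if_neg (by lia), hc, turnMonomial_succ_succ]
    rw [hturn]
    split_ifs at htie ⊢ <;>
      linear_combination (1 - X ^ 2) ^ (n + 1) * (1 + X) * hstep + (1 + X) * X * ih
        + (1 - X ^ 2) * htie

end TieChainSeries

section Descents

theorem card_filter_Icc_one_eq_count (p : ℕ → Prop) [DecidablePred p] (n : ℕ) :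
    #{i ∈ Icc 1 n | p i} = Nat.count (fun i => p (i + 1)) n := by
  induction n with
  | zero => simp
  | succ n ih =>
    rw [Nat.count_succ, ← ih, card_filter, card_filter, sum_Icc_succ_top (Nat.succ_pos n)]

/-- `i` is a descent of the one-line notation of `π`. Since `oneLine n π 0 = 0`, position `0` is
never a descent, so position `1` changes direction exactly when it is a left peak. -/
def IsDescent {n : ℕ} (π : Equiv.Perm (Fin n)) (i : ℕ) : Prop :=
  oneLine n π (i + 1) < oneLine n π i

/-- The positions `i` and `i + 1` of `π` are not both ascents or both descents. -/
def IsTurn {n : ℕ} (π : Equiv.Perm (Fin n)) (i : ℕ) : Prop :=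
  ¬ (IsDescent π i ↔ IsDescent π (i + 1))

theorem not_isDescent_zero {n : ℕ} (π : Equiv.Perm (Fin n)) : ¬ IsDescent π 0 := by
  simp [IsDescent, oneLine]

theorem oneLine_val_succ {n : ℕ} (π : Equiv.Perm (Fin n)) (i : Fin n) :
    oneLine n π (i + 1) = π i + 1 := by
  simp [oneLine]

theorem oneLine_ne_oneLine_succ {n : ℕ} (π : Equiv.Perm (Fin n)) {i : ℕ} (hi : i < n) :
    oneLine n π i ≠ oneLine n π (i + 1) := by
  obtain _ | i := i
  · simp [oneLine, Nat.succ_le_of_lt hi]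
  · have h := oneLine_val_succ π ⟨i, by lia⟩
    have h' := oneLine_val_succ π ⟨i + 1, hi⟩
    simp only at h h'
    rw [h, h', Ne, Nat.add_right_cancel_iff, ← Fin.ext_iff, π.injective.eq_iff, Fin.mk.injEq]
    exact (Nat.lt_succ_self i).ne

variable {n : ℕ} (π : Equiv.Perm (Fin (n + 1)))

theorem isDescent_succ_iff (i : Fin n) : IsDescent π (i + 1) ↔ π i.succ < π i.castSucc := by
  have hsucc := oneLine_val_succ π i.succ
  have hcast := oneLine_val_succ π i.castSucc
  rw [Fin.val_succ] at hsucc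
  rw [Fin.val_castSucc] at hcast
  rw [IsDescent, hsucc, hcast, Nat.add_lt_add_iff_right, Fin.lt_def]

theorem des_eq_count : des (n + 1) π = Nat.count (fun i => IsDescent π (i + 1)) n := by
  rw [← card_filter_Icc_one_eq_count (IsDescent π)]
  exact congrArg card (filter_congr fun i _ => Iff.rfl)

theorem lpk_eq_card : lpk (n + 1) π = #{i ∈ Icc 1 n | ¬ IsDescent π (i - 1) ∧ IsDescent π i} := by
  refine congrArg card (filter_congr fun i hi => and_congr_left' ?_)
  have hne := oneLine_ne_oneLine_succ π (i := i - 1) (by grind)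
  rw [IsDescent]
  rw [Nat.sub_add_cancel (mem_Icc.1 hi).1] at hne ⊢
  lia

theorem pval_eq_card : pval (n + 1) π = #{i ∈ Icc 1 n | IsDescent π (i - 1) ∧ ¬ IsDescent π i} := by
  refine congrArg card (ext fun i => ?_)
  have hzero := not_isDescent_zero π
  have hne := oneLine_ne_oneLine_succ π (i := i)
  simp only [mem_filter, mem_Icc]
  obtain _ | _ | i := i
  · simp
  · simp [hzero]
  · simp only [IsDescent] at hne ⊢
    grind

theorem udr_eq_count : udr (n + 1) π = Nat.count (IsTurn π) n + 1 := by
  have hturn : #{i ∈ Icc 1 n | IsTurn π (i - 1)} = Nat.count (IsTurn π) n :=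
    card_filter_Icc_one_eq_count (fun i => IsTurn π (i - 1)) n
  rw [udr, lpk_eq_card, pval_eq_card, ← hturn, ← card_union_of_disjoint, ← filter_or]
  · refine congrArg (#· + 1) (filter_congr fun i hi => ?_)
    rw [IsTurn, Nat.sub_add_cancel (mem_Icc.1 hi).1]
    tauto
  · exact disjoint_filter.2 fun i _ h h' => h.1 h'.1

theorem isDescent_iff_odd_count (n : ℕ) (π : Equiv.Perm (Fin n)) (i : ℕ) :
    IsDescent π i ↔ Odd (Nat.count (IsTurn π) i) := by
  induction i with
  | zero => simp [not_isDescent_zero]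
  | succ i ih =>
    rw [Nat.count_succ]
    by_cases h : IsTurn π i
    · rw [if_pos h, Nat.odd_add_one, ← ih]
      rw [IsTurn] at h
      tauto
    · rw [if_neg h, add_zero, ← ih]
      rw [IsTurn] at h
      tauto

theorem isCompatible_iff_isTieChain (t : ℕ → ℤˣ) {m : ℕ} (f : Fin (n + 1) → Fin m) :
    IsCompatible (fun a : Fin m => t a) π f
      ↔ IsTieChain (fun i v => t v = -1 ↔ IsDescent π (i + 1)) f := by
  rw [IsCompatible, Fin.strictMono_iff_lt_succ, IsTieChain]
  refine forall_congr' fun i => ?_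
  have hne : π i.castSucc ≠ π i.succ := π.injective.ne (Fin.castSucc_lt_succ).ne
  rw [isDescent_succ_iff, signedKey_lt_iff]
  refine or_congr_right (and_congr_right fun heq => ?_)
  rw [← heq]
  obtain h | h := Int.units_eq_one_or (t (f i.castSucc)) <;> rw [h]
  · have hsign : (1 : ℤˣ) ≠ -1 := by decide
    simp only [hsign, Units.val_one, one_mul, Nat.cast_lt, Fin.val_fin_lt, false_iff, not_lt]
    exact hne.le_iff_lt.symm
  · simp

theorem one_sub_X_pow_mul_mk_card_isCompatible_one {R : Type*} [CommRing R] :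
    (1 - X) ^ (n + 2) * PowerSeries.mk (fun m =>
        (#{f : Fin (n + 1) → Fin m | IsCompatible (1 : Fin m → ℤˣ) π f} : R))
      = X ^ (des (n + 1) π + 1) := by
  have hsign : (1 : ℤˣ) ≠ -1 := by decide
  have hchain (m : ℕ) (f : Fin (n + 1) → Fin m) : IsCompatible (1 : Fin m → ℤˣ) π f
      ↔ IsTieChain (fun i _ => ¬ IsDescent π (i + 1)) f := by
    simpa only [Pi.one_def, hsign, false_iff] using isCompatible_iff_isTieChain π 1 f
  simp only [hchain]
  rw [des_eq_count, pow_succ X, ← one_sub_X_pow_mul_tieChainSeries_not (R := R)]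
  linear_combination (1 - X) ^ (n + 1) * one_sub_X_mul_mk_card_isTieChain (R := R)
    (fun i _ => ¬ IsDescent π (i + 1)) n

variable (R : Type*) [CommRing R] [IsDomain R] [CharZero R]

theorem two_mul_one_sub_X_sq_pow_mul_mk_card_isCompatible_alternating (π : Equiv.Perm (Fin n))
    (hn : 1 ≤ n) :
    2 * (1 - X ^ 2) ^ (n + 1) * PowerSeries.mk (fun m =>
        (#{f : Fin n → Fin m | IsCompatible (fun a : Fin m => (-1) ^ (a : ℕ)) π f} : R))
      = (1 + X) ^ 2 * turnMonomial R n (udr n π) := by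
  obtain ⟨n, rfl⟩ := Nat.exists_eq_add_of_le' hn
  have hsign (v : ℕ) : (-1 : ℤˣ) ^ v = -1 ↔ Odd v := by
    obtain h | h := v.even_or_odd
    · simp [h.neg_one_pow, h]
    · simp [h.neg_one_pow, h]
  have hchain (m : ℕ) (f : Fin (n + 1) → Fin m) :
      IsCompatible (fun a : Fin m => (-1) ^ (a : ℕ)) π f
        ↔ IsTieChain (fun i v => Even (v + Nat.count (IsTurn π) (i + 1))) f := by
    simp only [isCompatible_iff_isTieChain π (fun v => (-1) ^ v) f, hsign, isDescent_iff_odd_count,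
      Nat.even_add, ← Nat.not_even_iff_odd, not_iff_not]
  simp only [hchain]
  rw [udr_eq_count, turnMonomial_succ_succ]
  linear_combination 2 * (1 - X ^ 2) ^ (n + 1) * (1 + X) * one_sub_X_mul_mk_card_isTieChain (R := R)
      (fun i v => Even (v + Nat.count (IsTurn π) (i + 1))) n
    + 2 * X * (1 + X) * one_sub_X_sq_pow_mul_tieChainSeries_even (R := R) (IsTurn π) n

end Descents

section CycleCounts

theorem prod_map_pow {R : Type*} [CommSemiring R] (s : Multiset ℕ) (e : ℕ → ℕ) (x : R) :
    (s.map fun p => x ^ e p).prod = x ^ (s.map e).sum := by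
  induction s using Multiset.induction with
  | empty => simp
  | cons p s ih => simp [ih, pow_add]

theorem sum_pow_eq_sum_card_mul_pow {α R : Type*} [CommSemiring R] {s : Finset α} {t : Finset ℕ}
    {e : α → ℕ} (he : ∀ a ∈ s, e a ∈ t) (x : R) :
    ∑ a ∈ s, x ^ e a = ∑ k ∈ t, (#{a ∈ s | e a = k} : R) * x ^ k := by
  rw [← sum_fiberwise_of_maps_to he]
  refine sum_congr rfl fun k _ => ?_
  rw [sum_congr rfl fun a ha => by rw [(mem_filter.1 ha).2], sum_const, nsmul_eq_mul]

variable {n : ℕ}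

theorem numCycles_le (σ : Equiv.Perm (Fin n)) : numCycles n σ ≤ n := by
  rw [numCycles, fullCycleType_eq]
  simpa [σ.partition.parts_sum] using
    Multiset.card_nsmul_le_sum fun p (hp : p ∈ σ.partition.parts) => σ.partition.parts_pos hp

theorem one_le_numCycles (hn : 1 ≤ n) (σ : Equiv.Perm (Fin n)) : 1 ≤ numCycles n σ := by
  rw [numCycles, fullCycleType_eq, Nat.one_le_iff_ne_zero, Ne, Multiset.card_eq_zero]
  intro h
  have hsum := σ.partition.parts_sum
  rw [h, Multiset.sum_zero, Fintype.card_fin] at hsum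
  lia

theorem numOddCycles_le (σ : Equiv.Perm (Fin n)) : numOddCycles n σ ≤ n :=
  (Multiset.card_le_card (Multiset.filter_le _ _)).trans (numCycles_le σ)

variable {K : Type*} [Field K]

theorem cycleWeightSum_eq_sum_cnk (hn : 1 ≤ n) (x : K) :
    cycleWeightSum (fun p => if 4 ∣ p then 0 else x ^ p.gcd 2) n
      = ∑ k ∈ Icc 1 n, (cnk n k : K) * x ^ k := by
  have hweight (σ : Equiv.Perm (Fin n)) :
      (σ.partition.parts.map fun p => if 4 ∣ p then 0 else x ^ p.gcd 2).prod
        = if ∀ p ∈ fullCycleType n σ, ¬ 4 ∣ p then x ^ numCycles n (σ ^ 2) else 0 := by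
    rw [numCycles_sq, ← prod_map_pow, fullCycleType_eq]
    split_ifs with h
    · exact congrArg _ (Multiset.map_congr rfl fun p hp => if_neg (h p hp))
    · push Not at h
      obtain ⟨p, hp, h4⟩ := h
      exact Multiset.prod_eq_zero (Multiset.mem_map.2 ⟨p, hp, if_pos h4⟩)
  rw [cycleWeightSum, sum_congr rfl fun σ _ => hweight σ, ← sum_filter,
    sum_pow_eq_sum_card_mul_pow fun σ _ =>
      mem_Icc.2 ⟨one_le_numCycles hn (σ ^ 2), numCycles_le (σ ^ 2)⟩]
  simp only [filter_filter, cnk]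

theorem cycleWeightSum_eq_sum_dnk (n : ℕ) (x : K) :
    cycleWeightSum (fun p => if 4 ∣ p then 1 else x ^ p.gcd 2) n
      = ∑ k ∈ range (n + 1), (dnk n k : K) * x ^ k := by
  have hweight (σ : Equiv.Perm (Fin n)) :
      (σ.partition.parts.map fun p => if 4 ∣ p then 1 else x ^ p.gcd 2).prod
        = x ^ numOddCycles n (σ ^ 2) := by
    rw [numOddCycles_sq, ← prod_map_pow]
    refine congrArg _ (Multiset.map_congr rfl fun p _ => ?_)
    rw [pow_ite, pow_zero]
  rw [cycleWeightSum, sum_congr rfl fun σ _ => hweight σ, sum_pow_eq_sum_card_mul_pow fun σ _ =>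
    mem_range_succ_iff.2 (numOddCycles_le (σ ^ 2))]
  rfl

theorem sum_invSet_card_isCompatible_alternating [CharZero K] (hn : 1 ≤ n) (m : ℕ) :
    (n.factorial : K) * ∑ π ∈ invSet n,
        (#{f : Fin n → Fin m | IsCompatible (fun a : Fin m => (-1) ^ (a : ℕ)) π f} : K)
      = if Even m then ∑ k ∈ Icc 1 n, (cnk n k : K) * m ^ k
        else ∑ k ∈ range (n + 1), (dnk n k : K) * m ^ k := by
  have hsigns : ∑ a : Fin m, ((((-1) ^ (a : ℕ) : ℤˣ) : ℤ) : K) = if Even m then 0 else 1 := by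
    rw [← neg_one_geom_sum, ← Fin.sum_univ_eq_sum_range]
    simp
  rw [sum_invSet_card_isCompatible_eq_cycleWeightSum, hsigns, ← cycleWeightSum_eq_sum_cnk hn,
    ← cycleWeightSum_eq_sum_dnk]
  split_ifs <;> simp

end CycleCounts

section EulerianPolynomials

theorem coe_eulerianA {k : ℕ} (hk : 1 ≤ k) :
    (eulerianA k : ℚ⟦X⟧) = (1 - X) ^ (k + 1) * PowerSeries.mk fun j => (j : ℚ) ^ k := by
  obtain ⟨k, rfl⟩ := Nat.exists_eq_add_of_le' hk
  have hsum : (PowerSeries.mk fun j => (j : ℚ) ^ (k + 1)) = ∑ σ : Equiv.Perm (Fin (k + 1)),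
      PowerSeries.mk fun m =>
        (#{f : Fin (k + 1) → Fin m | IsCompatible (1 : Fin m → ℤˣ) σ f} : ℚ) := by
    ext m
    simp only [map_sum, coeff_mk, ← Nat.cast_sum, sum_card_isCompatible, Fintype.card_fin,
      Nat.cast_pow]
  rw [hsum, mul_sum, eulerianA, ← Polynomial.coeToPowerSeries.ringHom_apply, map_sum]
  refine sum_congr rfl fun σ _ => ?_
  rw [one_sub_X_pow_mul_mk_card_isCompatible_one]
  simp

variable {R : Type*} [CommRing R]

theorem coe_comp_X_sq (p : Polynomial R) :
    (p.comp (Polynomial.X ^ 2) : R⟦X⟧) = PowerSeries.expand 2 two_ne_zero (p : R⟦X⟧) := by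
  rw [← Polynomial.expand_eq_comp_X_pow]
  ext i
  rw [Polynomial.coeff_coe, Polynomial.coeff_expand two_pos, PowerSeries.coeff_expand,
    Polynomial.coeff_coe]

theorem coe_comp_X_sq_mul_one_sub_X_sq_pow {p : Polynomial R} {a : ℕ → R} {k n : ℕ}
    (hp : (p : R⟦X⟧) = (1 - X) ^ (k + 1) * PowerSeries.mk a) (hkn : k ≤ n) :
    (p.comp (Polynomial.X ^ 2) : R⟦X⟧) * (1 - X ^ 2) ^ (n - k)
      = (1 - X ^ 2) ^ (n + 1) * PowerSeries.expand 2 two_ne_zero (PowerSeries.mk a) := by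
  have hexp : n + 1 = k + 1 + (n - k) := by lia
  rw [coe_comp_X_sq, hp, hexp, pow_add]
  simp only [map_mul, map_pow, map_sub, map_one, expand_X]
  ring

theorem two_pow_mul_expand_mk_pow (k : ℕ) :
    2 ^ k * PowerSeries.expand 2 two_ne_zero (PowerSeries.mk fun j => (j : R) ^ k)
      = PowerSeries.mk fun i => if Even i then (i : R) ^ k else 0 := by
  ext i
  rw [← map_ofNat (C (R := R)), ← map_pow, coeff_C_mul]
  obtain ⟨j, rfl | rfl⟩ := i.even_or_odd'
  · simp [mul_pow]
  · simp [coeff_expand]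

theorem X_mul_expand_mk_pow (k : ℕ) :
    X * PowerSeries.expand 2 two_ne_zero (PowerSeries.mk fun j => ((2 * j + 1 : ℕ) : R) ^ k)
      = PowerSeries.mk fun i => if Even i then 0 else (i : R) ^ k := by
  ext (_ | i)
  · simp
  rw [coeff_succ_X_mul]
  obtain ⟨j, rfl | rfl⟩ := i.even_or_odd'
  · simp
  · simp [coeff_expand, Nat.even_add_one]

theorem two_pow_mul_coe_eulerianA_comp {k n : ℕ} (hk : 1 ≤ k) (hkn : k ≤ n) :
    2 ^ k * ((eulerianA k).comp (Polynomial.X ^ 2) : ℚ⟦X⟧) * (1 - X ^ 2) ^ (n - k)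
      = (1 - X ^ 2) ^ (n + 1) * PowerSeries.mk fun m => if Even m then (m : ℚ) ^ k else 0 := by
  rw [mul_assoc, coe_comp_X_sq_mul_one_sub_X_sq_pow (coe_eulerianA hk) hkn, mul_left_comm,
    two_pow_mul_expand_mk_pow]

theorem X_mul_coe_comp_X_sq {p : Polynomial R} {k n : ℕ}
    (hp : (p : R⟦X⟧) = (1 - X) ^ (k + 1) * PowerSeries.mk fun j => ((2 * j + 1 : ℕ) : R) ^ k)
    (hkn : k ≤ n) :
    X * (p.comp (Polynomial.X ^ 2) : R⟦X⟧) * (1 - X ^ 2) ^ (n - k)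
      = (1 - X ^ 2) ^ (n + 1) * PowerSeries.mk fun m => if Even m then 0 else (m : R) ^ k := by
  rw [mul_assoc, coe_comp_X_sq_mul_one_sub_X_sq_pow hp hkn, mul_left_comm, X_mul_expand_mk_pow]

end EulerianPolynomials

section UpDownRuns

variable {K : Type*} [Field K] [CharZero K] {n : ℕ}

theorem factorial_mul_sum_turnMonomial_udr (hn : 1 ≤ n) :
    (n.factorial : K⟦X⟧) * (1 + X) ^ 2 * ∑ π ∈ invSet n, turnMonomial K n (udr n π)
      = 2 * (1 - X ^ 2) ^ (n + 1) * PowerSeries.mk fun m =>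
          if Even m then ∑ k ∈ Icc 1 n, (cnk n k : K) * m ^ k
          else ∑ k ∈ range (n + 1), (dnk n k : K) * m ^ k := by
  have hcount : (PowerSeries.mk fun m =>
      if Even m then ∑ k ∈ Icc 1 n, (cnk n k : K) * m ^ k
      else ∑ k ∈ range (n + 1), (dnk n k : K) * m ^ k)
      = (n.factorial : K⟦X⟧) * ∑ π ∈ invSet n, PowerSeries.mk fun m =>
          (#{f : Fin n → Fin m | IsCompatible (fun a : Fin m => (-1) ^ (a : ℕ)) π f} : K) := by
    ext m
    rw [coeff_mk, ← sum_invSet_card_isCompatible_alternating hn, ← map_natCast (C (R := K)),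
      coeff_C_mul, map_sum]
    simp only [coeff_mk]
  rw [hcount]
  simp only [mul_sum]
  refine sum_congr rfl fun π _ => ?_
  linear_combination -(n.factorial : K⟦X⟧)
    * two_mul_one_sub_X_sq_pow_mul_mk_card_isCompatible_alternating K π hn

theorem mk_ite_even_sum {R : Type*} [CommRing R] (s t : Finset ℕ) (c d : ℕ → ℕ) :
    (PowerSeries.mk fun m =>
        if Even m then ∑ k ∈ s, (c k : R) * m ^ k else ∑ k ∈ t, (d k : R) * m ^ k)
      = ∑ k ∈ s, c k * (PowerSeries.mk fun m => if Even m then (m : R) ^ k else 0)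
        + ∑ k ∈ t, d k * (PowerSeries.mk fun m => if Even m then 0 else (m : R) ^ k) := by
  ext m
  simp only [← map_natCast (C (R := R)), map_add, map_sum, coeff_C_mul, coeff_mk]
  split_ifs <;> simp

end UpDownRuns

theorem stmt16 (n : ℕ) (hn : 1 ≤ n) (B : ℕ → Polynomial ℚ)
    (hB : ∀ m : ℕ, ((B m : PowerSeries ℚ))
      = (1 - PowerSeries.X) ^ (m + 1)
          * PowerSeries.mk (fun k => ((2 * k + 1 : ℕ) : ℚ) ^ m)) :
    (n.factorial : Polynomial ℚ) * (1 + Polynomial.X) ^ 2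
        * ∑ π ∈ invSet n,
            (2 : Polynomial ℚ) ^ udr n π * Polynomial.X ^ udr n π
              * (1 + Polynomial.X ^ 2) ^ (n - udr n π)
      = 2 * ∑ k ∈ Finset.Icc 1 n,
            (cnk n k : Polynomial ℚ) * 2 ^ k * (eulerianA k).comp (Polynomial.X ^ 2)
              * (1 - Polynomial.X ^ 2) ^ (n - k)
        + 2 * Polynomial.X * ∑ k ∈ Finset.range (n + 1),
            (dnk n k : Polynomial ℚ) * (B k).comp (Polynomial.X ^ 2)
              * (1 - Polynomial.X ^ 2) ^ (n - k) := by
  have hmain := factorial_mul_sum_turnMonomial_udr (K := ℚ) hn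
  simp only [turnMonomial, mul_pow, mk_ite_even_sum] at hmain
  apply Polynomial.coe_injective ℚ
  simp only [← Polynomial.coeToPowerSeries.ringHom_apply, map_mul, map_add, map_sub, map_pow,
    map_sum, map_one, map_ofNat, map_natCast]
  simp only [Polynomial.coeToPowerSeries.ringHom_apply, Polynomial.coe_X]
  rw [hmain]
  simp only [mul_add, mul_sum]
  congr 1 <;> refine sum_congr rfl fun k hk => ?_
  · linear_combination -(2 * (cnk n k : ℚ⟦X⟧))
      * two_pow_mul_coe_eulerianA_comp (mem_Icc.1 hk).1 (mem_Icc.1 hk).2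
  · linear_combination -(2 * (dnk n k : ℚ⟦X⟧))
      * X_mul_coe_comp_X_sq (hB k) (mem_range_succ_iff.1 hk)

end
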